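/- Let p be a prime with p > h, and let λ ∈ X⁺ ∩ C̄_ℤ be weakly p-linked to 0, say λ = w·0 + pσ with w ∈ W and σ ∈ X. Then σ is dominant and (σ, α₀∨) ∈ {0,1}; that is, σ is either zero or a minuscule dominant weight. Moreover, if (σ, α₀∨) = 0 then λ = 0, w = 1, and σ = 0. -/

import Mathlib

open scoped RealInnerProductSpace

namespace PaperDNN

variable {E : Type*} [NormedAddCommGroup E] [InnerProductSpace ℝ E]

/-- The coroot pairing `⟨x, α∨⟩ = 2⟪x,α⟫/⟪α,α⟫`. -/
noncomputable def pair (x a : E) : ℝ := 2 * ⟪x, a⟫ / ⟪a, a⟫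

/-- `Φ` is a reduced irreducible root system in the Euclidean space `E`. -/
structure IsRootSystem (Φ : Finset E) : Prop where
  nonempty : Φ.Nonempty
  ne_zero : ∀ α ∈ Φ, α ≠ 0
  span_top : Submodule.span ℝ (Φ : Set E) = ⊤
  reduced : ∀ α ∈ Φ, ∀ t : ℝ, t • α ∈ Φ → t = 1 ∨ t = -1
  reflect_mem : ∀ α ∈ Φ, ∀ β ∈ Φ, β - pair β α • α ∈ Φ
  pair_int : ∀ α ∈ Φ, ∀ β ∈ Φ, ∃ n : ℤ, pair β α = (n : ℝ)
  irred : ∀ S T : Set E, S ∪ T = (Φ : Set E) → S.Nonempty → T.Nonempty →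
      (∀ a ∈ S, ∀ b ∈ T, ⟪a, b⟫ = 0) → False

/-- `Δ` is a base of simple roots for `Φ`: every root is a nonnegative or
nonpositive integral combination of the simple roots. -/
structure IsBase (Φ Δ : Finset E) : Prop where
  subset : Δ ⊆ Φ
  indep : LinearIndependent ℝ (fun a : {x // x ∈ Δ} => (a : E))
  root_decomp : ∀ β ∈ Φ, (∃ c : E → ℕ, β = ∑ α ∈ Δ, (c α : ℝ) • α) ∨
      (∃ c : E → ℕ, β = -(∑ α ∈ Δ, (c α : ℝ) • α))

open Classical in
/-- The positive roots `Φ⁺` of `Φ` with respect to the base `Δ`. -/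
noncomputable def posRoots (Φ Δ : Finset E) : Finset E :=
  Φ.filter fun β => ∃ c : E → ℕ, β = ∑ α ∈ Δ, (c α : ℝ) • α

/-- `ρ`, one-half the sum of the positive roots. -/
noncomputable def rho (Φ Δ : Finset E) : E := (2⁻¹ : ℝ) • ∑ β ∈ posRoots Φ Δ, β

/-- The Weyl group of `Φ`, the subgroup of `GL(E)` generated by the reflections
`s_α : x ↦ x − ⟨x,α∨⟩α` in the roots `α ∈ Φ`.  Applied to a subset `J` of the
simple roots it yields the parabolic subgroup `W_J`. -/
def Weyl (Φ : Finset E) : Subgroup (E ≃ₗ[ℝ] E) :=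
  Subgroup.closure { w : E ≃ₗ[ℝ] E | ∃ α ∈ Φ, ∀ x, w x = x - pair x α • α }

/-- The dot action `w·λ = w(λ+ρ) − ρ`. -/
noncomputable def dotAct (Φ Δ : Finset E) (w : E ≃ₗ[ℝ] E) (lam : E) : E :=
  w (lam + rho Φ Δ) - rho Φ Δ

/-- The weight lattice `X = {λ ∈ E : ⟨λ,α∨⟩ ∈ ℤ for all α ∈ Φ}`. -/
def weightLattice (Φ : Finset E) : Set E :=
  { lam | ∀ α ∈ Φ, ∃ n : ℤ, pair lam α = (n : ℝ) }

/-- The root lattice `ℤΦ`. -/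
def rootLattice (Φ : Finset E) : AddSubgroup E := AddSubgroup.closure (Φ : Set E)

/-- The bottom `p`-alcove `C_ℤ = {λ ∈ X : 0 < ⟨λ+ρ,β∨⟩ < p for all β ∈ Φ⁺}`. -/
def bottomAlcove (Φ Δ : Finset E) (p : ℕ) : Set E :=
  { lam ∈ weightLattice Φ | ∀ β ∈ posRoots Φ Δ,
      0 < pair (lam + rho Φ Δ) β ∧ pair (lam + rho Φ Δ) β < (p : ℝ) }

/-- The closure `C̄_ℤ = {λ ∈ X : 0 ≤ ⟨λ+ρ,β∨⟩ ≤ p for all β ∈ Φ⁺}` of the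
bottom `p`-alcove. -/
def closedAlcove (Φ Δ : Finset E) (p : ℕ) : Set E :=
  { lam ∈ weightLattice Φ | ∀ β ∈ posRoots Φ Δ,
      0 ≤ pair (lam + rho Φ Δ) β ∧ pair (lam + rho Φ Δ) β ≤ (p : ℝ) }

/-- Membership in `X⁺`, the set of dominant weights. -/
def isDominant (Φ Δ : Finset E) (lam : E) : Prop :=
  lam ∈ weightLattice Φ ∧ ∀ α ∈ Δ, 0 ≤ pair lam α

/-- `a₀` is the highest short root of `Φ`: a root of minimal length such that
every root of the same length is `≤ a₀` (their difference is a nonnegative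
integral combination of simple roots). -/
structure IsHighestShortRoot (Φ Δ : Finset E) (a₀ : E) : Prop where
  mem : a₀ ∈ Φ
  short : ∀ β ∈ Φ, ⟪a₀, a₀⟫ ≤ ⟪β, β⟫
  highest : ∀ β ∈ Φ, ⟪β, β⟫ = ⟪a₀, a₀⟫ →
      ∃ c : E → ℕ, a₀ - β = ∑ α ∈ Δ, (c α : ℝ) • α


/-!
Write `λ + ρ = wρ + pσ`.  For a positive root `β` the closed alcove gives `0 ≤ (λ + ρ, β∨) ≤ p`,
while `(wρ, β∨) = (ρ, (w⁻¹β)∨)` has absolute value at most `(ρ, α₀∨) = h - 1 < p`.  Hence the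
integer `(σ, β∨)` lies strictly between `-1` and `2`.

The bound `(x, β∨) ≤ (x, α₀∨)` for dominant `x` is maximality of `α₀` when `β` is short.  In
general, irreducibility supplies a short root `γ` with `(β, γ∨) ≥ 2`, and
`(s_β γ)∨ = γ∨ - (β, γ∨) β∨` exhibits `(β, γ∨) β∨` as a sum of two coroots of short roots.

If `(σ, α₀∨) = 0`, the same bound for `σ` makes `σ` orthogonal to every root, so `σ = 0` and
`wρ = λ + ρ` lies in the closed dominant chamber.  Then `(ρ, w⁻¹α) ≥ 0` for each simple `α`, so
`w⁻¹` maps simple roots to positive roots, and the exchange condition forces `w = 1`.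
-/

section

open scoped Pointwise

/-! ### The coroot pairing and reflections -/

lemma pair_add (x y a : E) : pair (x + y) a = pair x a + pair y a := by
  simp only [pair, inner_add_left]; ring

lemma pair_sub (x y a : E) : pair (x - y) a = pair x a - pair y a := by
  simp only [pair, inner_sub_left]; ring

lemma pair_smul (t : ℝ) (x a : E) : pair (t • x) a = t * pair x a := by
  simp only [pair, real_inner_smul_left]; ring

lemma pair_sum {ι : Type*} (s : Finset ι) (f : ι → E) (a : E) :
    pair (∑ i ∈ s, f i) a = ∑ i ∈ s, pair (f i) a := by
  simp only [pair, sum_inner, Finset.mul_sum, Finset.sum_div]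

lemma pair_neg_right (x a : E) : pair x (-a) = -pair x a := by
  rw [pair, pair, inner_neg_neg, inner_neg_right, mul_neg, neg_div]

lemma pair_self {a : E} (ha : a ≠ 0) : pair a a = 2 :=
  mul_div_cancel_right₀ 2 (inner_self_ne_zero.2 ha)

lemma pair_pos_iff {x a : E} (ha : a ≠ 0) : 0 < pair x a ↔ 0 < ⟪x, a⟫ := by
  rw [pair, div_pos_iff_of_pos_right (real_inner_self_pos.2 ha), mul_pos_iff_of_pos_left two_pos]

lemma pair_nonneg_iff {x a : E} (ha : a ≠ 0) : 0 ≤ pair x a ↔ 0 ≤ ⟪x, a⟫ := by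
  rw [pair, le_div_iff₀ (real_inner_self_pos.2 ha), zero_mul, mul_nonneg_iff_of_pos_left two_pos]

lemma pair_eq_zero_iff {x a : E} (ha : a ≠ 0) : pair x a = 0 ↔ ⟪x, a⟫ = 0 := by
  simp [pair, ha]

lemma pair_map_map {f : E → E} (hf : ∀ x y, ⟪f x, f y⟫ = ⟪x, y⟫) (x a : E) :
    pair (f x) (f a) = pair x a := by
  simp only [pair, hf]

/-- The orthogonal reflection `x ↦ x - ⟨x, a∨⟩ a` in the hyperplane `a⊥`, taken in `GL(E)` because
`Weyl` is a subgroup of it.  For `a = 0` it is the identity. -/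
noncomputable def rootReflection (a : E) : E ≃ₗ[ℝ] E :=
  ((ℝ ∙ a)ᗮ.reflection).toLinearEquiv

lemma rootReflection_apply (a x : E) : rootReflection a x = x - pair x a • a := by
  have hcoeff : 2 * (⟪a, x⟫ / ‖a‖ ^ 2) = pair x a := by
    rw [pair, real_inner_comm, real_inner_self_eq_norm_sq, mul_div_assoc]
  change (ℝ ∙ a)ᗮ.reflection x = _
  rw [Submodule.reflection_orthogonal_apply, Submodule.reflection_singleton_apply, neg_sub,
    ← Nat.cast_smul_eq_nsmul ℝ, smul_smul]
  exact congrArg (x - · • a) hcoeff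

lemma rootReflection_rootReflection (a x : E) : rootReflection a (rootReflection a x) = x :=
  Submodule.reflection_reflection _ x

lemma rootReflection_mul_self (a : E) : rootReflection a * rootReflection a = 1 :=
  LinearEquiv.ext (rootReflection_rootReflection a)

lemma rootReflection_inv (a : E) : (rootReflection a)⁻¹ = rootReflection a :=
  inv_eq_of_mul_eq_one_left (rootReflection_mul_self a)

lemma rootReflection_self (a : E) : rootReflection a a = -a :=
  Submodule.reflection_orthogonalComplement_singleton_eq_neg a

lemma rootReflection_neg (a : E) : rootReflection (-a) = rootReflection a := by
  ext x
  rw [rootReflection_apply, rootReflection_apply, pair_neg_right, smul_neg, neg_smul, neg_neg]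

lemma inner_rootReflection (a x y : E) : ⟪rootReflection a x, rootReflection a y⟫ = ⟪x, y⟫ :=
  (ℝ ∙ a)ᗮ.reflection.inner_map_map x y

lemma pair_rootReflection_left (x a b : E) :
    pair (rootReflection a x) b = pair x b - pair x a * pair a b := by
  rw [rootReflection_apply, pair_sub, pair_smul]

lemma pair_rootReflection_right (x a b : E) :
    pair x (rootReflection a b) = pair x b - pair a b * pair x a := by
  rw [← rootReflection_rootReflection a x, pair_map_map (inner_rootReflection a),
    rootReflection_rootReflection, pair_rootReflection_left, mul_comm]

lemma mul_rootReflection {w : E ≃ₗ[ℝ] E} (hw : ∀ x y, ⟪w x, w y⟫ = ⟪x, y⟫) (a : E) :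
    w * rootReflection a = rootReflection (w a) * w := by
  ext x
  simp only [LinearEquiv.mul_apply, rootReflection_apply, map_sub, map_smul, pair_map_map hw]

variable {Φ Δ : Finset E}

/-! ### The Weyl group -/

lemma weyl_eq_closure_rootReflection (S : Finset E) :
    Weyl S = Subgroup.closure (rootReflection '' (S : Set E)) := by
  refine congrArg Subgroup.closure <|
    Set.ext fun w => exists_congr fun a => and_congr_right fun _ => ?_
  simp only [LinearEquiv.ext_iff, rootReflection_apply, eq_comm]

lemma rootReflection_mem_weyl {S : Finset E} {a : E} (ha : a ∈ S) : rootReflection a ∈ Weyl S :=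
  Subgroup.subset_closure ⟨a, ha, rootReflection_apply a⟩

lemma inner_map_map_of_mem_weyl {S : Finset E} {w : E ≃ₗ[ℝ] E} (hw : w ∈ Weyl S) (x y : E) :
    ⟪w x, w y⟫ = ⟪x, y⟫ := by
  rw [weyl_eq_closure_rootReflection] at hw
  induction hw using Subgroup.closure_induction generalizing x y with
  | mem w hw =>
    obtain ⟨a, -, rfl⟩ := hw
    exact inner_rootReflection a x y
  | one => rfl
  | mul u v _ _ hu hv => rw [LinearEquiv.mul_apply, LinearEquiv.mul_apply, hu, hv]
  | inv u _ hu => rw [← hu, LinearEquiv.coe_inv, u.apply_symm_apply, u.apply_symm_apply]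

lemma IsRootSystem.rootReflection_mem (hΦ : IsRootSystem Φ) {α β : E} (hα : α ∈ Φ) (hβ : β ∈ Φ) :
    rootReflection α β ∈ Φ := by
  rw [rootReflection_apply]
  exact hΦ.reflect_mem α hα β hβ

lemma IsRootSystem.neg_mem (hΦ : IsRootSystem Φ) {β : E} (hβ : β ∈ Φ) : -β ∈ Φ :=
  rootReflection_self β ▸ hΦ.rootReflection_mem hβ hβ

lemma IsRootSystem.weyl_apply_mem (hΦ : IsRootSystem Φ) {w : E ≃ₗ[ℝ] E} (hw : w ∈ Weyl Φ) {β : E}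
    (hβ : β ∈ Φ) : w β ∈ Φ := by
  classical
  have hle : Weyl Φ ≤ MulAction.stabilizer (E ≃ₗ[ℝ] E) Φ := by
    rw [weyl_eq_closure_rootReflection, Subgroup.closure_le]
    rintro _ ⟨α, hα, rfl⟩
    exact MulAction.mem_stabilizer_finset'.2 fun _ => hΦ.rootReflection_mem hα
  exact MulAction.mem_stabilizer_finset'.1 (hle hw) hβ

lemma IsRootSystem.eq_zero_of_pair_eq_zero (hΦ : IsRootSystem Φ) {x : E}
    (hx : ∀ β ∈ Φ, pair x β = 0) : x = 0 := by
  have hinner : innerₛₗ ℝ x = 0 :=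
    LinearMap.ext_on hΦ.span_top fun β hβ => (pair_eq_zero_iff (hΦ.ne_zero β hβ)).1 (hx β hβ)
  exact inner_self_eq_zero.1 (LinearMap.congr_fun hinner x)

/-! ### Positive roots -/

lemma mem_posRoots {β : E} :
    β ∈ posRoots Φ Δ ↔ β ∈ Φ ∧ ∃ c : E → ℕ, β = ∑ α ∈ Δ, (c α : ℝ) • α := by
  classical
  exact Finset.mem_filter

lemma mem_of_mem_posRoots {β : E} (hβ : β ∈ posRoots Φ Δ) : β ∈ Φ :=
  (mem_posRoots.1 hβ).1

lemma IsBase.simple_mem_posRoots (hΔ : IsBase Φ Δ) {α : E} (hα : α ∈ Δ) : α ∈ posRoots Φ Δ := by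
  classical
  exact mem_posRoots.2 ⟨hΔ.subset hα, Pi.single α 1, by simp [Pi.single_apply, hα]⟩

lemma IsBase.simple_ne_zero (hΔ : IsBase Φ Δ) {α : E} (hα : α ∈ Δ) : α ≠ 0 :=
  hΔ.indep.ne_zero ⟨α, hα⟩

lemma IsBase.posRoot_or_neg_posRoot (hΔ : IsBase Φ Δ) (hΦ : IsRootSystem Φ) {β : E} (hβ : β ∈ Φ) :
    β ∈ posRoots Φ Δ ∨ -β ∈ posRoots Φ Δ :=
  (hΔ.root_decomp β hβ).imp (fun hc => mem_posRoots.2 ⟨hβ, hc⟩)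
    fun ⟨c, hc⟩ => mem_posRoots.2 ⟨hΦ.neg_mem hβ, c, neg_eq_iff_eq_neg.2 hc⟩

lemma IsBase.coeff_eq_of_sum_eq (hΔ : IsBase Φ Δ) {c d : E → ℝ}
    (h : ∑ α ∈ Δ, c α • α = ∑ α ∈ Δ, d α • α) {α : E} (hα : α ∈ Δ) : c α = d α :=
  linearIndepOn_finset_iffₛ.1 (show LinearIndepOn ℝ id (Δ : Set E) from hΔ.indep) c d h α hα

/-- A simple reflection changes only the coefficient of its own simple root. -/
lemma IsBase.rootReflection_mem_posRoots (hΔ : IsBase Φ Δ) (hΦ : IsRootSystem Φ) {α β : E}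
    (hα : α ∈ Δ) (hβ : β ∈ posRoots Φ Δ) (hne : β ≠ α) : rootReflection α β ∈ posRoots Φ Δ := by
  classical
  obtain ⟨hβΦ, c, hc⟩ := mem_posRoots.1 hβ
  refine (hΔ.posRoot_or_neg_posRoot hΦ
    (hΦ.rootReflection_mem (hΔ.subset hα) hβΦ)).resolve_right fun hneg => ?_
  obtain ⟨-, d, hd⟩ := mem_posRoots.1 hneg
  have hsum : ∑ γ ∈ Δ, ((c γ : ℝ) + d γ) • γ = ∑ γ ∈ Δ, (if γ = α then pair β α else 0) • γ := by
    simp only [add_smul, Finset.sum_add_distrib, ← hc, ← hd, rootReflection_apply, ite_smul,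
      zero_smul, Finset.sum_ite_eq', hα, if_true]
    abel
  have hc_zero : ∀ γ ∈ Δ, γ ≠ α → c γ = 0 := by
    intro γ hγ hγα
    have hcd : (c γ : ℝ) + d γ = 0 := by
      simpa only [if_neg hγα] using hΔ.coeff_eq_of_sum_eq hsum hγ
    norm_cast at hcd
    omega
  have hβα : β = (c α : ℝ) • α := hc.trans <|
    Finset.sum_eq_single_of_mem α hα fun γ hγ hγα => by rw [hc_zero γ hγ hγα]; simp
  rcases hΦ.reduced α (hΔ.subset hα) (c α) (hβα ▸ hβΦ) with hone | hneg_one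
  · exact hne (by rw [hβα, hone, one_smul])
  · exact absurd hneg_one (by linarith [(c α).cast_nonneg (α := ℝ)])

lemma IsBase.neg_notMem_posRoots (hΔ : IsBase Φ Δ) (hΦ : IsRootSystem Φ) {β : E}
    (hβ : β ∈ posRoots Φ Δ) : -β ∉ posRoots Φ Δ := by
  intro hneg
  obtain ⟨hβΦ, c, hc⟩ := mem_posRoots.1 hβ
  obtain ⟨-, d, hd⟩ := mem_posRoots.1 hneg
  have hsum : ∑ α ∈ Δ, ((c α : ℝ) + d α) • α = ∑ α ∈ Δ, (0 : ℝ) • α := by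
    simp only [add_smul, Finset.sum_add_distrib, ← hc, ← hd, add_neg_cancel, zero_smul,
      Finset.sum_const_zero]
  refine hΦ.ne_zero β hβΦ (hc.trans (Finset.sum_eq_zero fun α hα => ?_))
  have hcd : (c α : ℝ) + d α = 0 := hΔ.coeff_eq_of_sum_eq hsum hα
  norm_cast at hcd
  rw [Nat.eq_zero_of_add_eq_zero_right hcd, Nat.cast_zero, zero_smul]

lemma inner_sum_smul_nonneg {x : E} (hx : ∀ α ∈ Δ, 0 ≤ ⟪x, α⟫) (c : E → ℕ) :
    0 ≤ ⟪x, ∑ α ∈ Δ, (c α : ℝ) • α⟫ := by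
  simp only [inner_sum, real_inner_smul_right]
  exact Finset.sum_nonneg fun α hα => mul_nonneg (Nat.cast_nonneg _) (hx α hα)

lemma IsRootSystem.inner_posRoot_pos (hΦ : IsRootSystem Φ) {x β : E} (hx : ∀ α ∈ Δ, 0 < ⟪x, α⟫)
    (hβ : β ∈ posRoots Φ Δ) : 0 < ⟪x, β⟫ := by
  obtain ⟨hβΦ, c, rfl⟩ := mem_posRoots.1 hβ
  obtain ⟨α, hα, hcα⟩ := Finset.exists_ne_zero_of_sum_ne_zero (hΦ.ne_zero _ hβΦ)
  have hcα_pos : (0 : ℝ) < c α := (Nat.cast_nonneg _).lt_of_ne' (smul_ne_zero_iff.1 hcα).1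
  simp only [inner_sum, real_inner_smul_right]
  exact Finset.sum_pos' (fun γ hγ => mul_nonneg (Nat.cast_nonneg _) (hx γ hγ).le)
    ⟨α, hα, mul_pos hcα_pos (hx α hα)⟩

lemma IsRootSystem.exists_simple_inner_pos (hΦ : IsRootSystem Φ) {β : E}
    (hβ : β ∈ posRoots Φ Δ) : ∃ α ∈ Δ, 0 < ⟪β, α⟫ := by
  by_contra! hnonpos
  obtain ⟨hβΦ, c, hc⟩ := mem_posRoots.1 hβ
  have hneg := inner_sum_smul_nonneg (x := -β) (fun α hα => by simpa using hnonpos α hα) c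
  rw [← hc, inner_neg_left] at hneg
  linarith [real_inner_self_pos.2 (hΦ.ne_zero β hβΦ)]

/-! ### The vector `ρ` -/

lemma IsBase.pair_rho_simple (hΔ : IsBase Φ Δ) (hΦ : IsRootSystem Φ) {α : E} (hα : α ∈ Δ) :
    pair (rho Φ Δ) α = 1 := by
  classical
  have hpair_neg (β : E) : pair (rootReflection α β) α = -pair β α := by
    rw [pair_rootReflection_left, pair_self (hΔ.simple_ne_zero hα)]; ring
  have hmaps : ∀ β ∈ (posRoots Φ Δ).erase α, rootReflection α β ∈ (posRoots Φ Δ).erase α := by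
    intro β hβ
    obtain ⟨hne, hβpos⟩ := Finset.mem_erase.1 hβ
    refine Finset.mem_erase.2 ⟨fun heq => ?_, hΔ.rootReflection_mem_posRoots hΦ hα hβpos hne⟩
    have hβα : β = -α := by rw [← rootReflection_rootReflection α β, heq, rootReflection_self]
    exact hΔ.neg_notMem_posRoots hΦ (hΔ.simple_mem_posRoots hα) (hβα ▸ hβpos)
  have hsum : ∑ β ∈ (posRoots Φ Δ).erase α, pair β α = 0 :=
    Finset.sum_involution (fun β _ => rootReflection α β)
      (fun β _ => by rw [hpair_neg, add_neg_cancel])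
      (fun β _ hβ hfix => hβ (by linarith [hfix ▸ hpair_neg β]))
      hmaps (fun β _ => rootReflection_rootReflection α β)
  rw [rho, pair_smul, pair_sum, ← Finset.add_sum_erase _ _ (hΔ.simple_mem_posRoots hα), hsum,
    pair_self (hΔ.simple_ne_zero hα)]
  norm_num

lemma IsBase.inner_rho_simple_pos (hΔ : IsBase Φ Δ) (hΦ : IsRootSystem Φ) {α : E} (hα : α ∈ Δ) :
    0 < ⟪rho Φ Δ, α⟫ :=
  (pair_pos_iff (hΔ.simple_ne_zero hα)).1 (hΔ.pair_rho_simple hΦ hα ▸ one_pos)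

lemma IsBase.mem_posRoots_of_inner_rho_nonneg (hΔ : IsBase Φ Δ) (hΦ : IsRootSystem Φ) {β : E}
    (hβ : β ∈ Φ) (hρ : 0 ≤ ⟪rho Φ Δ, β⟫) : β ∈ posRoots Φ Δ := by
  refine (hΔ.posRoot_or_neg_posRoot hΦ hβ).resolve_right fun hneg => ?_
  have hpos := hΦ.inner_posRoot_pos (fun _ => hΔ.inner_rho_simple_pos hΦ) hneg
  rw [inner_neg_right] at hpos
  linarith

/-! ### The highest short root -/

/-- The roots orthogonal to `S` and the remaining roots are orthogonal to each other. -/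
lemma IsRootSystem.exists_inner_ne_zero (hΦ : IsRootSystem Φ) {S : Set E} (hSΦ : S ⊆ Φ)
    (hS : S.Nonempty) (hrefl : ∀ α ∈ Φ, ∀ γ ∈ S, rootReflection α γ ∈ S) {β : E} (hβ : β ∈ Φ) :
    ∃ γ ∈ S, ⟪γ, β⟫ ≠ 0 := by
  by_contra! hβS
  let orth : Set E := {b | ∀ γ ∈ S, ⟪γ, b⟫ = 0}
  obtain ⟨γ₀, hγ₀⟩ := hS
  have hγ₀_orth : γ₀ ∉ orth := fun h =>
    hΦ.ne_zero γ₀ (hSΦ hγ₀) (inner_self_eq_zero.1 (h γ₀ hγ₀))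
  refine hΦ.irred (Φ \ orth) (Φ ∩ orth) (Set.sdiff_union_inter _ _) ⟨γ₀, hSΦ hγ₀, hγ₀_orth⟩
    ⟨β, hβ, hβS⟩ ?_
  rintro b ⟨hb, hb_orth⟩ t ⟨-, ht⟩
  obtain ⟨γ, hγ, hγb⟩ : ∃ γ ∈ S, ⟪γ, b⟫ ≠ 0 := by simpa [orth] using hb_orth
  have hmul : pair γ b * ⟪b, t⟫ = 0 := by
    have hreflect := ht _ (hrefl b hb γ hγ)
    rw [rootReflection_apply, inner_sub_left, real_inner_smul_left, ht γ hγ] at hreflect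
    linarith
  exact (mul_eq_zero.1 hmul).resolve_left (hγb ∘ (pair_eq_zero_iff (hΦ.ne_zero b hb)).1)

variable {a₀ : E}

lemma IsHighestShortRoot.exists_short_inner_pos (ha₀ : IsHighestShortRoot Φ Δ a₀)
    (hΦ : IsRootSystem Φ) {β : E} (hβ : β ∈ Φ) :
    ∃ γ ∈ Φ, ⟪γ, γ⟫ = ⟪a₀, a₀⟫ ∧ 0 < ⟪γ, β⟫ := by
  obtain ⟨γ, ⟨hγ, hshort⟩, hne⟩ :=
    hΦ.exists_inner_ne_zero (S := {γ | γ ∈ Φ ∧ ⟪γ, γ⟫ = ⟪a₀, a₀⟫}) (fun γ hγ => hγ.1)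
      ⟨a₀, ha₀.mem, rfl⟩
      (fun α hα γ hγ => ⟨hΦ.rootReflection_mem hα hγ.1, by rw [inner_rootReflection, hγ.2]⟩) hβ
  rcases hne.lt_or_gt with hlt | hgt
  · exact ⟨-γ, hΦ.neg_mem hγ, by rw [inner_neg_neg, hshort],
      by rw [inner_neg_left]; exact neg_pos.2 hlt⟩
  · exact ⟨γ, hγ, hshort, hgt⟩

lemma IsHighestShortRoot.exists_short_two_le_pair (ha₀ : IsHighestShortRoot Φ Δ a₀)
    (hΦ : IsRootSystem Φ) {β : E} (hβ : β ∈ Φ) :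
    ∃ γ ∈ Φ, ⟪γ, γ⟫ = ⟪a₀, a₀⟫ ∧ 2 ≤ pair β γ := by
  rcases (ha₀.short β hβ).eq_or_lt with hshort | hlong
  · exact ⟨β, hβ, hshort.symm, (pair_self (hΦ.ne_zero β hβ)).ge⟩
  obtain ⟨γ, hγ, hshort, hpos⟩ := ha₀.exists_short_inner_pos hΦ hβ
  obtain ⟨m, hm⟩ := hΦ.pair_int γ hγ β hβ
  obtain ⟨n, hn⟩ := hΦ.pair_int β hβ γ hγ
  have hn_pos : (0 : ℝ) < n := hn ▸ (pair_pos_iff (hΦ.ne_zero β hβ)).2 hpos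
  have hlt : (n : ℝ) < m := by
    rw [← hm, ← hn, pair, pair, real_inner_comm γ β, hshort]
    exact div_lt_div_of_pos_left (by positivity)
      (real_inner_self_pos.2 (hΦ.ne_zero a₀ ha₀.mem)) hlong
  norm_cast at hn_pos hlt
  exact ⟨γ, hγ, hshort, by rw [hm]; exact_mod_cast (by omega : 2 ≤ m)⟩

lemma IsHighestShortRoot.pair_le_of_short (ha₀ : IsHighestShortRoot Φ Δ a₀) (hΔ : IsBase Φ Δ)
    {x : E} (hx : ∀ α ∈ Δ, 0 ≤ pair x α) {β : E} (hβ : β ∈ Φ) (hshort : ⟪β, β⟫ = ⟪a₀, a₀⟫) :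
    pair x β ≤ pair x a₀ := by
  obtain ⟨c, hc⟩ := ha₀.highest β hβ hshort
  have hinner : 0 ≤ ⟪x, a₀ - β⟫ := hc ▸
    inner_sum_smul_nonneg (fun α hα => (pair_nonneg_iff (hΔ.simple_ne_zero hα)).1 (hx α hα)) c
  rw [inner_sub_right, sub_nonneg] at hinner
  rw [pair, pair, hshort]
  gcongr
  exact real_inner_self_nonneg

lemma IsHighestShortRoot.pair_nonneg (ha₀ : IsHighestShortRoot Φ Δ a₀) (hΦ : IsRootSystem Φ)
    (hΔ : IsBase Φ Δ) {x : E} (hx : ∀ α ∈ Δ, 0 ≤ pair x α) : 0 ≤ pair x a₀ := by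
  have hneg := ha₀.pair_le_of_short hΔ hx (hΦ.neg_mem ha₀.mem) (inner_neg_neg _ _)
  rw [pair_neg_right] at hneg
  linarith

lemma IsHighestShortRoot.mem_posRoots (ha₀ : IsHighestShortRoot Φ Δ a₀) (hΦ : IsRootSystem Φ)
    (hΔ : IsBase Φ Δ) : a₀ ∈ posRoots Φ Δ :=
  hΔ.mem_posRoots_of_inner_rho_nonneg hΦ ha₀.mem <|
    (pair_nonneg_iff (hΦ.ne_zero a₀ ha₀.mem)).1 <|
      ha₀.pair_nonneg hΦ hΔ fun _ hα => hΔ.pair_rho_simple hΦ hα ▸ zero_le_one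

lemma IsHighestShortRoot.pair_le (ha₀ : IsHighestShortRoot Φ Δ a₀) (hΦ : IsRootSystem Φ)
    (hΔ : IsBase Φ Δ) {x : E} (hx : ∀ α ∈ Δ, 0 ≤ pair x α) {β : E} (hβ : β ∈ Φ) :
    pair x β ≤ pair x a₀ := by
  obtain ⟨γ, hγ, hshort, htwo⟩ := ha₀.exists_short_two_le_pair hΦ hβ
  have hγ_le := ha₀.pair_le_of_short hΔ hx hγ hshort
  have hrefl_le := ha₀.pair_le_of_short hΔ hx (hΦ.neg_mem (hΦ.rootReflection_mem hβ hγ))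
    (by rw [inner_neg_neg, inner_rootReflection, hshort])
  rw [pair_neg_right, pair_rootReflection_right] at hrefl_le
  rcases le_total (pair x β) 0 with hnonpos | hnonneg
  · exact hnonpos.trans (ha₀.pair_nonneg hΦ hΔ hx)
  · linarith [mul_le_mul_of_nonneg_right htwo hnonneg]

lemma IsHighestShortRoot.abs_pair_le (ha₀ : IsHighestShortRoot Φ Δ a₀) (hΦ : IsRootSystem Φ)
    (hΔ : IsBase Φ Δ) {x : E} (hx : ∀ α ∈ Δ, 0 ≤ pair x α) {β : E} (hβ : β ∈ Φ) :
    |pair x β| ≤ pair x a₀ :=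
  abs_le'.2 ⟨ha₀.pair_le hΦ hΔ hx hβ, pair_neg_right x β ▸ ha₀.pair_le hΦ hΔ hx (hΦ.neg_mem hβ)⟩

lemma IsHighestShortRoot.abs_pair_weyl_le (ha₀ : IsHighestShortRoot Φ Δ a₀) (hΦ : IsRootSystem Φ)
    (hΔ : IsBase Φ Δ) {x : E} (hx : ∀ α ∈ Δ, 0 ≤ pair x α) {w : E ≃ₗ[ℝ] E} (hw : w ∈ Weyl Φ)
    {β : E} (hβ : β ∈ Φ) : |pair (w x) β| ≤ pair x a₀ := by
  rw [← w.apply_symm_apply β, pair_map_map (inner_map_map_of_mem_weyl hw)]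
  exact ha₀.abs_pair_le hΦ hΔ hx (hΦ.weyl_apply_mem (inv_mem hw) hβ)

lemma IsHighestShortRoot.eq_zero_of_pair_eq_zero (ha₀ : IsHighestShortRoot Φ Δ a₀)
    (hΦ : IsRootSystem Φ) (hΔ : IsBase Φ Δ) {x : E} (hx : ∀ α ∈ Δ, 0 ≤ pair x α)
    (h0 : pair x a₀ = 0) : x = 0 :=
  hΦ.eq_zero_of_pair_eq_zero fun _ hβ =>
    abs_nonpos_iff.1 ((ha₀.abs_pair_le hΦ hΔ hx hβ).trans h0.le)

/-! ### Words in simple reflections -/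

/-- Reflecting a positive root `β` in a simple root `α` with `(β, α) > 0` lowers `(ρ, β)`. -/
lemma IsBase.rootReflection_mem_weyl_base (hΔ : IsBase Φ Δ) (hΦ : IsRootSystem Φ) {β : E}
    (hβ : β ∈ posRoots Φ Δ) : rootReflection β ∈ Weyl Δ := by
  classical
  by_contra hβW
  obtain ⟨b, hb, hmin⟩ := ((posRoots Φ Δ).filter (rootReflection · ∉ Weyl Δ)).exists_min_image
    (⟪rho Φ Δ, ·⟫) ⟨β, Finset.mem_filter.2 ⟨hβ, hβW⟩⟩
  obtain ⟨hbpos, hbW⟩ := Finset.mem_filter.1 hb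
  obtain ⟨α, hα, hbα⟩ := hΦ.exists_simple_inner_pos hbpos
  have hne : b ≠ α := by
    rintro rfl
    exact hbW (rootReflection_mem_weyl hα)
  have hlt : ⟪rho Φ Δ, rootReflection α b⟫ < ⟪rho Φ Δ, b⟫ := by
    rw [rootReflection_apply, inner_sub_right, real_inner_smul_right]
    exact sub_lt_self _
      (mul_pos ((pair_pos_iff (hΔ.simple_ne_zero hα)).2 hbα) (hΔ.inner_rho_simple_pos hΦ hα))
  have hreflW : rootReflection (rootReflection α b) ∈ Weyl Δ := by
    by_contra hreflW
    exact hlt.not_ge (hmin _ (Finset.mem_filter.2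
      ⟨hΔ.rootReflection_mem_posRoots hΦ hα hbpos hne, hreflW⟩))
  have hαW : rootReflection α ∈ Weyl Δ := rootReflection_mem_weyl hα
  refine hbW ((Subgroup.mul_mem_cancel_left _ hαW).1 ?_)
  rw [mul_rootReflection (inner_rootReflection α)]
  exact mul_mem hreflW hαW

lemma IsBase.weyl_eq_weyl_base (hΔ : IsBase Φ Δ) (hΦ : IsRootSystem Φ) : Weyl Φ = Weyl Δ := by
  apply le_antisymm
  · rw [weyl_eq_closure_rootReflection Φ, Subgroup.closure_le]
    rintro _ ⟨β, hβ, rfl⟩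
    rcases hΔ.posRoot_or_neg_posRoot hΦ hβ with hpos | hneg
    · exact hΔ.rootReflection_mem_weyl_base hΦ hpos
    · exact rootReflection_neg β ▸ hΔ.rootReflection_mem_weyl_base hΦ hneg
  · rw [weyl_eq_closure_rootReflection, weyl_eq_closure_rootReflection]
    exact Subgroup.closure_mono (Set.image_mono (Finset.coe_subset.2 hΔ.subset))

lemma exists_mem_pow_of_mem_closure {G : Type*} [Group G] {S : Set G} (hS : S⁻¹ = S) {g : G}
    (hg : g ∈ Subgroup.closure S) : ∃ n : ℕ, g ∈ S ^ n := by
  induction hg using Subgroup.closure_induction with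
  | mem g hg => exact ⟨1, by rwa [pow_one]⟩
  | one => exact ⟨0, by rw [pow_zero]; exact Set.one_mem_one⟩
  | mul g k _ _ hg hk =>
    obtain ⟨m, hm⟩ := hg
    obtain ⟨n, hn⟩ := hk
    exact ⟨m + n, pow_add S m n ▸ Set.mul_mem_mul hm hn⟩
  | inv g _ hg =>
    obtain ⟨n, hn⟩ := hg
    exact ⟨n, by rwa [← hS, inv_pow, Set.inv_mem_inv]⟩

/-- The set `{s_α : α ∈ Δ}`.  Its pointwise power `simpleReflections Δ ^ n` consists of the
products of words of length `n` in these reflections. -/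
def simpleReflections (Δ : Finset E) : Set (E ≃ₗ[ℝ] E) :=
  rootReflection '' Δ

lemma exists_mem_simpleReflections_pow {w : E ≃ₗ[ℝ] E} (hw : w ∈ Weyl Δ) :
    ∃ n : ℕ, w ∈ simpleReflections Δ ^ n := by
  refine exists_mem_pow_of_mem_closure ?_ (weyl_eq_closure_rootReflection Δ ▸ hw)
  rw [simpleReflections, ← Set.image_inv_eq_inv, Set.image_image]
  simp only [rootReflection_inv]

lemma mem_weyl_of_mem_simpleReflections_pow {w : E ≃ₗ[ℝ] E} {n : ℕ}
    (hw : w ∈ simpleReflections Δ ^ n) : w ∈ Weyl Δ := by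
  have hsub : simpleReflections Δ ⊆ (Weyl Δ : Set (E ≃ₗ[ℝ] E)) := by
    rintro _ ⟨α, hα, rfl⟩
    exact rootReflection_mem_weyl hα
  exact Submonoid.pow_subset (S := (Weyl Δ).toSubmonoid) hsub hw

/-- The exchange condition: the letter at which `α` turns negative can be deleted, since the root
reached there is the simple root of that letter. -/
lemma IsBase.exists_mul_rootReflection_mem_pow (hΔ : IsBase Φ Δ) (hΦ : IsRootSystem Φ) {α : E}
    (hα : α ∈ Δ) {w : E ≃ₗ[ℝ] E} {n : ℕ} (hw : w ∈ simpleReflections Δ ^ n)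
    (hwα : w α ∉ posRoots Φ Δ) :
    ∃ m, n = m + 1 ∧ w * rootReflection α ∈ simpleReflections Δ ^ m := by
  induction n generalizing w with
  | zero =>
    obtain rfl : w = 1 := hw
    exact absurd (hΔ.simple_mem_posRoots hα) hwα
  | succ n ih =>
    rw [pow_succ'] at hw
    obtain ⟨_, ⟨b, hb, rfl⟩, u, hu, rfl⟩ := hw
    refine ⟨n, rfl, ?_⟩
    by_cases huα : u α ∈ posRoots Φ Δ
    · have hub : u α = b := by
        by_contra hne
        exact hwα (hΔ.rootReflection_mem_posRoots hΦ hb huα hne)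
      have hisom := inner_map_map_of_mem_weyl (mem_weyl_of_mem_simpleReflections_pow hu)
      rwa [mul_assoc, mul_rootReflection hisom, hub, ← mul_assoc, rootReflection_mul_self, one_mul]
    · obtain ⟨m, rfl, hm⟩ := ih hu huα
      rw [mul_assoc, pow_succ']
      exact Set.mul_mem_mul ⟨b, hb, rfl⟩ hm

/-- Exchange rewrites a nonempty word as one two letters shorter. -/
lemma IsBase.eq_one_of_mem_pow (hΔ : IsBase Φ Δ) (hΦ : IsRootSystem Φ) {w : E ≃ₗ[ℝ] E} {n : ℕ}
    (hw : w ∈ simpleReflections Δ ^ n) (hpos : ∀ α ∈ Δ, w α ∈ posRoots Φ Δ) : w = 1 := by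
  induction n using Nat.strong_induction_on with
  | _ n ih =>
    obtain _ | n := n
    · exact hw
    rw [pow_succ] at hw
    obtain ⟨u, hu, _, ⟨α, hα, rfl⟩, rfl⟩ := hw
    have huα : u α ∉ posRoots Φ Δ := by
      have hneg : -u α ∈ posRoots Φ Δ := by
        simpa [rootReflection_self] using hpos α hα
      exact fun h => hΔ.neg_notMem_posRoots hΦ h hneg
    obtain ⟨m, rfl, hm⟩ := hΔ.exists_mul_rootReflection_mem_pow hΦ hα hu huα
    exact ih m (by omega) hm

lemma IsBase.eq_one_of_rho_map_dominant (hΔ : IsBase Φ Δ) (hΦ : IsRootSystem Φ) {w : E ≃ₗ[ℝ] E}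
    (hw : w ∈ Weyl Φ) (hdom : ∀ α ∈ Δ, 0 ≤ pair (w (rho Φ Δ)) α) : w = 1 := by
  have hpos : ∀ α ∈ Δ, w⁻¹ α ∈ posRoots Φ Δ := by
    intro α hα
    refine hΔ.mem_posRoots_of_inner_rho_nonneg hΦ
      (hΦ.weyl_apply_mem (inv_mem hw) (hΔ.subset hα)) ?_
    rw [← inner_map_map_of_mem_weyl hw, LinearEquiv.coe_inv, LinearEquiv.apply_symm_apply]
    exact (pair_nonneg_iff (hΔ.simple_ne_zero hα)).1 (hdom α hα)
  obtain ⟨n, hn⟩ := exists_mem_simpleReflections_pow (hΔ.weyl_eq_weyl_base hΦ ▸ inv_mem hw)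
  exact inv_eq_one.1 (hΔ.eq_one_of_mem_pow hΦ hn hpos)

/-! ### Weights of the closed alcove linked to zero -/

lemma eq_zero_or_one_of_abs_lt {n : ℤ} {t q : ℝ} (ht : |t| < q) (hnonneg : 0 ≤ t + q * n)
    (hle : t + q * n ≤ q) : n = 0 ∨ n = 1 := by
  obtain ⟨hlower, hupper⟩ := abs_lt.1 ht
  have hgt : (-1 : ℝ) < n := by by_contra! hcon; nlinarith
  have hlt : (n : ℝ) < 2 := by by_contra! hcon; nlinarith
  norm_cast at hgt hlt
  omega

lemma IsHighestShortRoot.pair_eq_zero_or_one (ha₀ : IsHighestShortRoot Φ Δ a₀)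
    (hΦ : IsRootSystem Φ) (hΔ : IsBase Φ Δ) {p : ℕ} (hp : pair (rho Φ Δ) a₀ < p) {lam : E}
    (halc : lam ∈ closedAlcove Φ Δ p) {w : E ≃ₗ[ℝ] E} (hw : w ∈ Weyl Φ) {σ : E}
    (hσ : σ ∈ weightLattice Φ) (hlink : lam + rho Φ Δ = w (rho Φ Δ) + (p : ℝ) • σ) {β : E}
    (hβ : β ∈ posRoots Φ Δ) : pair σ β = 0 ∨ pair σ β = 1 := by
  obtain ⟨n, hn⟩ := hσ β (mem_of_mem_posRoots hβ)
  have hbounds := halc.2 β hβ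
  rw [hlink, pair_add, pair_smul, hn] at hbounds
  have habs := ha₀.abs_pair_weyl_le hΦ hΔ (fun _ hα => hΔ.pair_rho_simple hΦ hα ▸ zero_le_one) hw
    (mem_of_mem_posRoots hβ)
  rw [hn]
  exact_mod_cast eq_zero_or_one_of_abs_lt (habs.trans_lt hp) hbounds.1 hbounds.2

end

theorem statement8_general
    (Φ Δ : Finset E) (hΦ : IsRootSystem Φ) (hΔ : IsBase Φ Δ)
    (a₀ : E) (ha₀ : IsHighestShortRoot Φ Δ a₀)
    (h : ℕ) (hcox : (h : ℝ) = pair (rho Φ Δ) a₀ + 1)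
    (p : ℕ) (hbig : h ≤ p)
    (lam : E) (halc : lam ∈ closedAlcove Φ Δ p)
    (w : E ≃ₗ[ℝ] E) (hw : w ∈ Weyl Φ) (σ : E) (hσ : σ ∈ weightLattice Φ)
    (hlink : lam = dotAct Φ Δ w 0 + (p : ℝ) • σ) :
    (∀ α ∈ Δ, 0 ≤ pair σ α) ∧ (pair σ a₀ = 0 ∨ pair σ a₀ = 1) ∧
      (pair σ a₀ = 0 → lam = 0 ∧ w = 1 ∧ σ = 0) := by
  have hshift : lam + rho Φ Δ = w (rho Φ Δ) + (p : ℝ) • σ := by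
    rw [hlink, dotAct, zero_add]; abel
  have hp : pair (rho Φ Δ) a₀ < p := by
    have hhp : (h : ℝ) ≤ p := by exact_mod_cast hbig
    linarith
  have hσ01 : ∀ β ∈ posRoots Φ Δ, pair σ β = 0 ∨ pair σ β = 1 := fun _ =>
    ha₀.pair_eq_zero_or_one hΦ hΔ hp halc hw hσ hshift
  have hσdom : ∀ α ∈ Δ, 0 ≤ pair σ α := fun α hα => by
    rcases hσ01 α (hΔ.simple_mem_posRoots hα) with hval | hval <;> simp [hval]
  refine ⟨hσdom, hσ01 a₀ (ha₀.mem_posRoots hΦ hΔ), fun h0 => ?_⟩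
  obtain rfl : σ = 0 := ha₀.eq_zero_of_pair_eq_zero hΦ hΔ hσdom h0
  rw [smul_zero, add_zero] at hshift
  obtain rfl : w = 1 := hΔ.eq_one_of_rho_map_dominant hΦ hw fun α hα =>
    hshift ▸ (halc.2 α (hΔ.simple_mem_posRoots hα)).1
  exact ⟨add_eq_right.1 hshift, rfl, rfl⟩

/-- Let `p` be a prime with `p > h`, and let `λ ∈ X⁺ ∩ C̄_ℤ` be
weakly `p`-linked to `0`, say `λ = w·0 + pσ` with `w ∈ W` and `σ ∈ X`.  Then `σ`
is dominant and `(σ, α₀∨) ∈ {0,1}`; that is, `σ` is either zero or a minuscule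
dominant weight.  Moreover, if `(σ, α₀∨) = 0` then `λ = 0`, `w = 1` and `σ = 0`. -/
theorem statement8
    (Φ Δ : Finset E) (hΦ : IsRootSystem Φ) (hΔ : IsBase Φ Δ)
    (a₀ : E) (ha₀ : IsHighestShortRoot Φ Δ a₀)
    (h : ℕ) (hcox : (h : ℝ) = pair (rho Φ Δ) a₀ + 1)
    (p : ℕ) (hp : p.Prime) (hbig : h < p)
    (lam : E) (hdom : isDominant Φ Δ lam) (halc : lam ∈ closedAlcove Φ Δ p)
    (w : E ≃ₗ[ℝ] E) (hw : w ∈ Weyl Φ) (σ : E) (hσ : σ ∈ weightLattice Φ)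
    (hlink : lam = dotAct Φ Δ w 0 + (p : ℝ) • σ) :
    (∀ α ∈ Δ, 0 ≤ pair σ α) ∧ (pair σ a₀ = 0 ∨ pair σ a₀ = 1) ∧
      (pair σ a₀ = 0 → lam = 0 ∧ w = 1 ∧ σ = 0) :=
  statement8_general Φ Δ hΦ hΔ a₀ ha₀ h hcox p hbig.le lam halc w hw σ hσ hlink

end PaperDNN
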